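/- Let RG be a region graph with exactly three terminal vertices (n = 3) satisfying Assumption 1, and suppose RG is terminal-separable. Then RG is feasible if at least one of the following conditions holds: (1) |Λ_{j_1}| ≥ 3 and |Λ_{j_2}| ≥ 3 for some pair {j_1,j_2} ⊆ {1,2,3}; (2) for every pair {j_1,j_2} ⊆ {1,2,3}, if |Λ_{j_1}| = |Λ_{j_2}| = 2 then Λ_{j_1} ∩ Λ_{j_2} = ∅; (3) S_i ∉ Λ_j for all i, j ∈ {1,2,3}; (4) there is a pair {ℓ',ℓ''} ⊆ {1,2,3} such that Λ_j ∩ reg°(S_{ℓ'},S_{ℓ''}) ≠ ∅ for all j ∈ {1,2,3}. -/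

import Mathlib

namespace SumNetworksPaper

/-- `SuperReg Adj Θ R` : `R` belongs to the super region generated by `Θ`:
the smallest set containing `Θ` and containing every vertex whose parent set
is nonempty and entirely contained in the set. -/
inductive SuperReg {V : Type} (Adj : V → V → Prop) (Θ : Set V) : V → Prop
  | base {R : V} : R ∈ Θ → SuperReg Adj Θ R
  | step {R : V} : (∃ P, Adj P R) → (∀ P, Adj P R → SuperReg Adj Θ P) →
      SuperReg Adj Θ R

/-- The super region `reg(Θ)` as a set. -/
def superReg {V : Type} (Adj : V → V → Prop) (Θ : Set V) : Set V :=
  {R | SuperReg Adj Θ R}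

/-- A region graph: a finite directed acyclic simple graph with three source
vertices `S 0, S 1, S 2` (which have no parents) and `n` terminal vertices
`T 0, …, T (n-1)`, in which every non-source vertex has at least two parents.
`Adj P R` means that there is an edge from `P` to `R`, i.e. `P` is a parent of `R`. -/
structure RegionGraph (n : ℕ) where
  V : Type
  fintypeV : Fintype V
  Adj : V → V → Prop
  acyclic : ∀ v : V, ¬ Relation.TransGen Adj v v
  S : Fin 3 → V
  T : Fin n → V
  S_inj : Function.Injective S
  T_inj : Function.Injective T
  source_no_parent : ∀ (i : Fin 3) (v : V), ¬ Adj v (S i)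
  two_parents : ∀ v : V, (∀ i : Fin 3, v ≠ S i) →
    ∃ p q : V, p ≠ q ∧ Adj p v ∧ Adj q v

namespace RegionGraph

variable {n : ℕ} (G : RegionGraph n)

/-- The super region `reg(Θ)`. -/
def reg (Θ : Set G.V) : Set G.V := superReg G.Adj Θ

/-- `reg°(Θ) = reg(Θ) ∖ Θ`. -/
def regO (Θ : Set G.V) : Set G.V := G.reg Θ \ Θ

/-- `reg(S_i, S_j)`. -/
def regPair (i j : Fin 3) : Set G.V := G.reg {G.S i, G.S j}

/-- `u → v` : there is a directed path from `u` to `v` (possibly trivial). -/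
def Reaches (u v : G.V) : Prop := Relation.ReflTransGen G.Adj u v

/-- `Π = reg(S_1,S_2) ∪ reg(S_1,S_3) ∪ reg(S_2,S_3)`. -/
def bigPi : Set G.V := G.regPair 0 1 ∪ G.regPair 0 2 ∪ G.regPair 1 2

/-- `Ω_I` : vertices outside `Π` reaching exactly the terminals `T j`, `j ∈ I`. -/
def Omega (I : Set (Fin n)) : Set G.V :=
  {R | R ∉ G.bigPi ∧ ∀ j : Fin n, j ∈ I ↔ G.Reaches R (G.T j)}

/-- `Λ_I` : vertices of `Π` having a child in `Ω_I`. -/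
def Lambda (I : Set (Fin n)) : Set G.V :=
  {Q | Q ∈ G.bigPi ∧ ∃ R, G.Adj Q R ∧ R ∈ G.Omega I}

/-- Assumption 1: no terminal vertex lies in `Π`. -/
def Assumption1 : Prop := ∀ j : Fin n, G.T j ∉ G.bigPi

/-- Terminal-separability: `Ω_I = ∅` whenever `|I| > 1`. -/
def TerminalSeparable : Prop :=
  ∀ I : Set (Fin n), 1 < I.ncard → G.Omega I = ∅

/-- A linear code of the region graph over `F`. -/
def IsLinearCode (F : Type) [Field F] (d : G.V → Fin 3 → F) : Prop :=
  (∀ i : Fin 3, d (G.S i) = Pi.single i 1) ∧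
  ∀ v : G.V, (∀ i : Fin 3, v ≠ G.S i) →
    d v ∈ Submodule.span F (d '' {p | G.Adj p v})

/-- A linear solution: a linear code giving `ᾱ = (1,1,1)` at every terminal. -/
def IsLinearSolution (F : Type) [Field F] (d : G.V → Fin 3 → F) : Prop :=
  G.IsLinearCode F d ∧ ∀ j : Fin n, d (G.T j) = fun _ => 1

/-- Feasibility: existence of a linear solution over some finite field. -/
def Feasible : Prop :=
  ∃ (F : Type) (_ : Field F) (_ : Fintype F) (d : G.V → Fin 3 → F),
    G.IsLinearSolution F d

/-- Conditions (1)–(3) on a family `{d_R : R ∈ Π}`. -/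
def Conds123 (F : Type) [Field F] (d : G.V → Fin 3 → F) : Prop :=
  (∀ i : Fin 3, d (G.S i) = Pi.single i 1) ∧
  (∀ R ∈ G.bigPi, (∀ i : Fin 3, R ≠ G.S i) →
    d R ∈ Submodule.span F (d '' {p | G.Adj p R})) ∧
  ∀ j : Fin n, (fun _ => (1 : F)) ∈ Submodule.span F (d '' G.Lambda {j})

/-- `I` is a partition of `Π` into nonempty classes. -/
def IsPartitionOfPi (I : Set (Set G.V)) : Prop :=
  (∀ Δ ∈ I, Δ.Nonempty ∧ Δ ⊆ G.bigPi) ∧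
  ⋃₀ I = G.bigPi ∧
  ∀ Δ ∈ I, ∀ Δ' ∈ I, Δ ≠ Δ' → Δ ∩ Δ' = ∅

/-- The three sources lie in three distinct classes of the partition. -/
def SourcesSeparated (I : Set (Set G.V)) : Prop :=
  ∀ Δ ∈ I, ∀ i j : Fin 3, G.S i ∈ Δ → G.S j ∈ Δ → i = j

/-- `[S_i]_i = [S_i]_{i,j₁} ∪ [S_i]_{i,j₂}` for the class `Δ` of `S_i`. -/
def srcSub (i : Fin 3) (Δ : Set G.V) : Set G.V :=
  Δ ∩ ⋃ (j : Fin 3) (_ : j ≠ i), G.regPair i j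

/-- `X` is a subclass of the class `Δ`. -/
def IsSubclass (Δ X : Set G.V) : Prop :=
  (∃ i : Fin 3, G.S i ∈ Δ ∧
    (X = G.srcSub i Δ ∨
      ∃ j k : Fin 3, j ≠ k ∧ j ≠ i ∧ k ≠ i ∧ X = Δ ∩ G.regPair j k)) ∨
  ((∀ i : Fin 3, G.S i ∉ Δ) ∧ ∃ i j : Fin 3, i ≠ j ∧ X = Δ ∩ G.regPair i j)

/-- The two classes `Δ'`, `Δ''` are connected. -/
def ClassesConnected (Δ' Δ'' : Set G.V) : Prop :=
  (∃ (j : Fin n) (X' X'' : Set G.V),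
      G.IsSubclass Δ' X' ∧ G.IsSubclass Δ'' X'' ∧ G.Lambda {j} ⊆ X' ∪ X'') ∨
  ∃ i j : Fin 3, i ≠ j ∧
    (G.reg (Δ' ∩ G.regPair i j) ∩ G.reg (Δ'' ∩ G.regPair i j)).Nonempty

/-- The partition `I` of `Π` is compatible. -/
def Compatible (I : Set (Set G.V)) : Prop :=
  G.SourcesSeparated I ∧
  (∀ Δ' ∈ I, ∀ Δ'' ∈ I, Δ' ≠ Δ'' → ¬ G.ClassesConnected Δ' Δ'') ∧
  ∀ (j : Fin n) (i₁ i₂ : Fin 3), i₁ ≠ i₂ →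
    ∀ Δ₁ ∈ I, ∀ Δ₂ ∈ I, G.S i₁ ∈ Δ₁ → G.S i₂ ∈ Δ₂ →
      ¬ (G.Lambda {j} ⊆ G.srcSub i₁ Δ₁ ∪ G.srcSub i₂ Δ₂ ∪
          ⋃₀ {X : Set G.V | ∃ Δ ∈ I, (∀ i : Fin 3, G.S i ∉ Δ) ∧
                X = Δ ∩ G.regPair i₁ i₂})

/-- `I'` is obtained from `I` by merging two connected classes. -/
def IsContractionStep (I I' : Set (Set G.V)) : Prop :=
  ∃ Δ' Δ'', Δ' ∈ I ∧ Δ'' ∈ I ∧ Δ' ≠ Δ'' ∧ G.ClassesConnected Δ' Δ'' ∧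
    I' = insert (Δ' ∪ Δ'') (I \ {Δ', Δ''})

/-- The trivial partition of `Π` into singletons. -/
def trivialPartition : Set (Set G.V) := {X | ∃ R ∈ G.bigPi, X = {R}}

/-- `Ic` is a character partition of `Π`. -/
def IsCharacterPartition (Ic : Set (Set G.V)) : Prop :=
  ∃ (L : ℕ) (c : ℕ → Set (Set G.V)),
    c 0 = G.trivialPartition ∧ c L = Ic ∧
    (∀ ℓ < L, G.SourcesSeparated (c ℓ) ∧ G.IsContractionStep (c ℓ) (c (ℓ + 1))) ∧
    ((∃ Δ ∈ Ic, ∃ i j : Fin 3, i ≠ j ∧ G.S i ∈ Δ ∧ G.S j ∈ Δ) ∨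
      ∀ Δ' ∈ Ic, ∀ Δ'' ∈ Ic, Δ' ≠ Δ'' → ¬ G.ClassesConnected Δ' Δ'')

/-- Property (a): `d_{Q'} ∈ span{d_Q, ᾱ}` for all `Q, Q'` in the class `Δ`. -/
def PropertyA (F : Type) [Field F] (d : G.V → Fin 3 → F) (Δ : Set G.V) : Prop :=
  ∀ Q ∈ Δ, ∀ Q' ∈ Δ, d Q' ∈ Submodule.span F {d Q, fun _ => (1 : F)}

end RegionGraph

/-- Condition (C-IR) for a region graph with three terminals. -/
def RegionGraph.CIR (G : RegionGraph 3) : Prop :=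
  ∃ (σ τ : Equiv.Perm (Fin 3)) (P₁ P₂ : G.V),
    P₁ ∈ G.regO {G.S (σ 1), G.S (σ 2)} ∧
    P₂ ∈ G.regO {G.S (σ 0), G.S (σ 1)} ∧
    G.Lambda {τ 0} = {G.S (σ 0), P₁} ∧
    G.Lambda {τ 1} = {P₁, P₂} ∧
    G.Lambda {τ 2} ⊆ G.reg {G.S (σ 0), P₂} ∪ G.reg {G.S (σ 0), G.S (σ 2)}



open Relation in
theorem flow_aux {V : Type} [Fintype V] {Adj : V → V → Prop}
    (hac : ∀ v : V, ¬ Relation.TransGen Adj v v) (A W : Set V) (hd : ∀ v ∈ A, v ∉ W) (T : V)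
    (hT : T ∈ W) (hn : ∀ P, (P ∈ A ∨ P ∈ W) → P ≠ T → ∃ R ∈ W, Adj P R)
    {F M : Type} [Field F] [AddCommGroup M] [Module F M] (b : V → M) (x : M)
    (hx : ∃ s : Finset V, (∀ v, v ∈ s ↔ v ∈ A) ∧ ∑ Q ∈ s, b Q = x) :
    ∃ g : V → M, g T = x ∧ ∀ R ∈ W, g R ∈ Submodule.span F
      ((b '' {P | P ∈ A ∧ Adj P R}) ∪ (g '' {P | P ∈ W ∧ Adj P R})) := by
  classical
  obtain ⟨s, hs, rfl⟩ := hx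
  have hn' : ∀ P, ∃ R, (P ∈ A ∨ P ∈ W) → P ≠ T → R ∈ W ∧ Adj P R := by
    intro P
    by_cases h : (P ∈ A ∨ P ∈ W) ∧ P ≠ T
    · obtain ⟨R, h1, h2⟩ := hn P h.1 h.2
      exact ⟨R, fun _ _ => ⟨h1, h2⟩⟩
    · exact ⟨P, fun h1 h2 => absurd ⟨h1, h2⟩ h⟩
  choose nxt hnxt using hn'
  let r : V → V → Prop := fun P R => (P ∈ A ∨ P ∈ W) ∧ P ≠ T ∧ nxt P = R
  have hrA : ∀ {P R}, r P R → Adj P R := by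
    rintro P R ⟨h1, h2, rfl⟩
    exact (hnxt P h1 h2).2
  have hrW : ∀ {P R}, r P R → R ∈ W := by
    rintro P R ⟨h1, h2, rfl⟩
    exact (hnxt P h1 h2).1
  have hru : Relator.RightUnique r := by
    rintro P R R' ⟨_, _, h⟩ ⟨_, _, h'⟩
    exact h.symm.trans h'
  have hrac : ∀ v, ¬ TransGen r v v := fun v h => hac v (TransGen.mono (fun _ _ => hrA) _ _ h)
  have wf : WellFounded (fun a b => TransGen Adj b a) := by
    have : IsTrans V (fun a b => TransGen Adj b a) := ⟨fun a b c h1 h2 => h2.trans h1⟩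
    have : Std.Irrefl (fun a b => TransGen Adj b a) := ⟨hac⟩
    exact Finite.wellFounded_of_trans_of_irrefl _
  have hreach : ∀ P, (P ∈ A ∨ P ∈ W) → ReflTransGen r P T := by
    intro P
    induction P using wf.induction with
    | _ P ih =>
      intro hP
      by_cases h : P = T
      · rw [h]
      · have h3 := hnxt P hP h
        exact ReflTransGen.head ⟨hP, h, rfl⟩ (ih _ (TransGen.single h3.2) (Or.inr h3.1))
  let g : V → M := fun R => ∑ Q ∈ s, if ReflTransGen r Q R then b Q else 0
  have hgA : ∀ P ∈ A, g P = b P := by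
    intro P hP
    have : ∀ Q ∈ s, (if ReflTransGen r Q P then b Q else 0) = if Q = P then b Q else 0 := by
      intro Q hQ
      have : ReflTransGen r Q P ↔ Q = P := by
        constructor
        · intro h
          rcases ReflTransGen.cases_tail h with h | ⟨c, _, h⟩
          · exact h.symm
          · exact absurd (hrW h) (hd P hP)
        · rintro rfl; exact ReflTransGen.refl
      simp only [this]
    show ∑ Q ∈ s, _ = _
    rw [Finset.sum_congr rfl this, Finset.sum_ite_eq' s P, if_pos ((hs P).2 hP)]
  have hgW : ∀ R ∈ W, g R = ∑ P, if r P R then g P else 0 := by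
    intro R hR
    have : ∀ P, (if r P R then g P else 0)
        = ∑ Q ∈ s, if (r P R ∧ ReflTransGen r Q P) then b Q else 0 := by
      intro P
      by_cases h : r P R
      · simp [h, g]
      · simp [h]
    simp only [this]
    rw [Finset.sum_comm]
    show ∑ Q ∈ s, _ = _
    refine Finset.sum_congr rfl fun Q hQ => ?_
    by_cases h : ReflTransGen r Q R
    · rw [if_pos h]
      rcases ReflTransGen.cases_tail h with h' | ⟨P, h1, h2⟩
      · subst h'
        exact absurd hR (hd _ ((hs _).1 hQ))
      · rw [Finset.sum_eq_single P, if_pos ⟨h2, h1⟩]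
        · intro P' _ hne
          rw [if_neg]
          rintro ⟨h3, h4⟩
          rcases ReflTransGen.total_of_right_unique hru h1 h4 with h5 | h5
          · rcases ReflTransGen.cases_head h5 with h6 | ⟨c, h6, h7⟩
            · exact hne h6.symm
            · cases hru h2 h6
              exact hrac _ (TransGen.tail' h7 h3)
          · rcases ReflTransGen.cases_head h5 with h6 | ⟨c, h6, h7⟩
            · exact hne h6
            · cases hru h3 h6
              exact hrac _ (TransGen.tail' h7 h2)
        · simp
    · rw [if_neg h, Finset.sum_eq_zero]
      intro P _
      rw [if_neg]
      rintro ⟨h1, h2⟩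
      exact h (h2.tail h1)
  refine ⟨g, ?_, ?_⟩
  · refine Finset.sum_congr rfl fun Q hQ => ?_
    rw [if_pos (hreach Q (Or.inl ((hs Q).1 hQ)))]
  · intro R hR
    rw [hgW R hR]
    refine Submodule.sum_mem _ fun P _ => ?_
    split_ifs with h
    · apply Submodule.subset_span
      rcases h.1 with h1 | h1
      · left
        exact ⟨P, ⟨h1, hrA h⟩, (hgA P h1).symm⟩
      · right
        exact ⟨P, ⟨h1, hrA h⟩, rfl⟩
    · exact Submodule.zero_mem _

namespace RegionGraph

variable (G : RegionGraph 3)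

theorem omega_of_reach (hTS : G.TerminalSeparable) {R : G.V} (hR : R ∉ G.bigPi) {j : Fin 3}
    (h : G.Reaches R (G.T j)) : R ∈ G.Omega {j} := by
  have h1 : R ∈ G.Omega {k | G.Reaches R (G.T k)} := ⟨hR, fun _ => Iff.rfl⟩
  by_cases h2 : 1 < ({k | G.Reaches R (G.T k)} : Set (Fin 3)).ncard
  · rw [hTS _ h2] at h1
    exact absurd h1 (Set.notMem_empty _)
  · have h3 : ({k | G.Reaches R (G.T k)} : Set (Fin 3)) = {j} := by
      ext k
      constructor
      · intro hk
        exact Set.ncard_le_one (Set.toFinite _) |>.1 (not_lt.1 h2) k hk j h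
      · rintro rfl
        exact h
    rwa [h3] at h1

def Ln (l : Fin 3) : Set G.V := G.reg {G.S (l + 1), G.S (l + 2)}

theorem bigPi_iff {v : G.V} : v ∈ G.bigPi ↔ ∃ l, v ∈ G.Ln l := by
  have h1 : G.regPair 0 2 = G.Ln 1 := by
    unfold regPair Ln
    rw [Set.pair_comm]; rfl
  have h0 : G.regPair 1 2 = G.Ln 0 := rfl
  have h2 : G.regPair 0 1 = G.Ln 2 := rfl
  unfold bigPi
  rw [h0, h1, h2]
  constructor
  · rintro ((h | h) | h)
    exacts [⟨_, h⟩, ⟨_, h⟩, ⟨_, h⟩]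
  · rintro ⟨l, h⟩
    fin_cases l
    · exact Or.inr h
    · exact Or.inl (Or.inr h)
    · exact Or.inl (Or.inl h)

theorem src_mem_Ln {i l : Fin 3} : G.S i ∈ G.Ln l ↔ i ≠ l := by
  constructor
  · intro h
    cases h with
    | base h =>
      have h' : i = l + 1 ∨ i = l + 2 := by
        rcases h with h | h
        · exact Or.inl (G.S_inj h)
        · exact Or.inr (G.S_inj h)
      clear h
      revert i l; decide
    | step h _ =>
      obtain ⟨P, hP⟩ := h
      exact absurd hP (G.source_no_parent _ _)
  · intro h
    apply SuperReg.base
    have : i = l + 1 ∨ i = l + 2 := by revert i l; decide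
    rcases this with h | h <;> subst h <;> simp

def IsSrc (v : G.V) : Prop := ∃ i, v = G.S i

theorem parent_Ln {v P : G.V} {l : Fin 3} (h : v ∈ G.Ln l) (hP : G.Adj P v) : P ∈ G.Ln l := by
  cases h with
  | base h =>
    rcases h with h | h <;> rw [h] at hP <;> exact absurd hP (G.source_no_parent _ _)
  | step _ h => exact h _ hP

theorem two_parents' {v : G.V} (h : ¬ G.IsSrc v) : ∃ p q, p ≠ q ∧ G.Adj p v ∧ G.Adj q v :=
  G.two_parents v fun i hi => h ⟨i, hi⟩

theorem Ln_disj {v : G.V} {l l' : Fin 3} (hl : l ≠ l') (h : v ∈ G.Ln l) (h' : v ∈ G.Ln l') :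
    G.IsSrc v := by
  have h0 : SuperReg G.Adj {G.S (l + 1), G.S (l + 2)} v := h
  clear h
  induction h0 with
  | base h =>
    rcases h with h | h
    exacts [⟨_, h⟩, ⟨_, h⟩]
  | @step R hex hall ih =>
    by_contra hns
    obtain ⟨p, q, hpq, hp, hq⟩ := G.two_parents' hns
    obtain ⟨i, rfl⟩ := ih p hp (G.parent_Ln h' hp)
    obtain ⟨k, rfl⟩ := ih q hq (G.parent_Ln h' hq)
    have e1 := (G.src_mem_Ln).1 (G.parent_Ln h' hp)
    have e2 := (G.src_mem_Ln).1 (G.parent_Ln h' hq)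
    have e3 := (G.src_mem_Ln (l := l)).1 (hall _ hp)
    have e4 := (G.src_mem_Ln (l := l)).1 (hall _ hq)
    have : i = k := by
      clear ih h' hall hex hns hp hq hpq
      revert i k l l'; decide
    exact hpq (by rw [this])

theorem parent_pi {v P : G.V} (h : v ∈ G.bigPi) (hP : G.Adj P v) : P ∈ G.bigPi := by
  obtain ⟨l, h⟩ := G.bigPi_iff.1 h
  exact G.bigPi_iff.2 ⟨l, G.parent_Ln h hP⟩

theorem src_pi (i : Fin 3) : G.S i ∈ G.bigPi :=
  G.bigPi_iff.2 ⟨i + 1, G.src_mem_Ln.2 (by revert i; decide)⟩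

theorem T_omega (hA : G.Assumption1) (hTS : G.TerminalSeparable) (j : Fin 3) :
    G.T j ∈ G.Omega {j} := G.omega_of_reach hTS (hA j) Relation.ReflTransGen.refl

theorem lambda_not_sub (hA : G.Assumption1) (hTS : G.TerminalSeparable) (j l : Fin 3) :
    ∃ v ∈ G.Lambda {j}, v ∉ G.Ln l := by
  by_contra hcon
  push Not at hcon
  have := G.fintypeV
  have wf : WellFounded (Relation.TransGen G.Adj) := by
    have : Std.Irrefl (Relation.TransGen G.Adj) := ⟨G.acyclic⟩
    exact Finite.wellFounded_of_trans_of_irrefl _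
  have : ∀ R, R ∉ G.Omega {j} := by
    intro R
    induction R using wf.induction with
    | _ R ih =>
      intro hR
      apply hR.1
      have hns : ¬ G.IsSrc R := by
        rintro ⟨i, rfl⟩
        exact hR.1 (G.src_pi i)
      obtain ⟨p, q, _, hp, _⟩ := G.two_parents' hns
      refine G.bigPi_iff.2 ⟨l, SuperReg.step ⟨p, hp⟩ fun P hP => ?_⟩
      by_cases h : P ∈ G.bigPi
      · exact hcon P ⟨h, R, hP, hR⟩
      · exact absurd (G.omega_of_reach hTS h
          (Relation.ReflTransGen.head hP ((hR.2 j).1 rfl))) (ih P (.single hP))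
  exact this _ (G.T_omega hA hTS j)

theorem feasible_of_conds (hA : G.Assumption1) (hTS : G.TerminalSeparable)
    (F : Type) [Field F] [Fintype F] (d : G.V → Fin 3 → F) (h : G.Conds123 F d) :
    G.Feasible := by
  classical
  have := G.fintypeV
  obtain ⟨h1, h2, h3⟩ := h
  have key : ∀ j : Fin 3, ∃ g : G.V → Fin 3 → F, g (G.T j) = (fun _ => 1) ∧
      ∀ R ∈ G.Omega {j}, g R ∈ Submodule.span F
        ((d '' {P | P ∈ G.Lambda {j} ∧ G.Adj P R}) ∪ (g '' {P | P ∈ G.Omega {j} ∧ G.Adj P R})) := by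
    intro j
    have h4 := h3 j
    let s : Finset G.V := (G.Lambda {j}).toFinset
    have hs : G.Lambda {j} = (s : Set G.V) := by simp [s]
    rw [hs, Submodule.mem_span_image_finset_iff_exists_fun] at h4
    obtain ⟨c0, hc0⟩ := h4
    obtain ⟨c, hc⟩ : ∃ c : G.V → F, ∑ v ∈ s, c v • d v = fun _ => 1 := by
      refine ⟨fun v => if h : v ∈ s then c0 ⟨v, h⟩ else 0, ?_⟩
      rw [← hc0, ← Finset.sum_coe_sort]
      refine Finset.sum_congr rfl fun v _ => ?_
      simp
    obtain ⟨g, hg1, hg2⟩ := flow_aux (F := F) G.acyclic (G.Lambda {j}) (G.Omega {j})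
      (fun v hv hv' => hv'.1 hv.1) (G.T j) (G.T_omega hA hTS j) (by
        rintro P (hP | hP) hne
        · obtain ⟨_, R, hR, hR'⟩ := hP
          exact ⟨R, hR', hR⟩
        · rcases Relation.ReflTransGen.cases_head ((hP.2 j).1 rfl) with h | ⟨R, hR, hR'⟩
          · exact absurd h hne
          · refine ⟨R, G.omega_of_reach hTS (fun h => ?_) hR', hR⟩
            exact hP.1 (G.parent_pi h hR)) (fun v => c v • d v) (fun _ => 1) ⟨s, by simp [s], hc⟩
    refine ⟨g, hg1, fun R hR => ?_⟩
    refine Submodule.span_le.2 ?_ (hg2 R hR)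
    rintro _ (⟨P, hP, rfl⟩ | h)
    · exact Submodule.smul_mem _ _ (Submodule.subset_span (Or.inl ⟨P, hP, rfl⟩))
    · exact Submodule.subset_span (Or.inr h)
  choose g hg1 hg2 using key
  have hOu : ∀ {R j k}, R ∈ G.Omega {j} → R ∈ G.Omega {k} → j = k := by
    intro R j k hj hk
    have := (hk.2 j).2 ((hj.2 j).1 rfl)
    exact this
  let e : G.V → Fin 3 → F := fun R => if R ∈ G.bigPi then d R else
    if h : ∃ j, R ∈ G.Omega {j} then g h.choose R else 0
  have e1 : ∀ R ∈ G.bigPi, e R = d R := fun R hR => if_pos hR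
  have e2 : ∀ R j, R ∈ G.Omega {j} → e R = g j R := by
    intro R j hR
    have hex : ∃ j, R ∈ G.Omega {j} := ⟨j, hR⟩
    simp only [e]
    rw [if_neg hR.1, dif_pos hex, hOu hex.choose_spec hR]
  refine ⟨F, inferInstance, inferInstance, e, ⟨?_, ?_⟩, ?_⟩
  · intro i
    rw [e1 _ (G.src_pi i), h1]
  · intro v hv
    by_cases hp : v ∈ G.bigPi
    · rw [e1 v hp]
      have := h2 v hp hv
      rwa [Set.image_congr (g := d)]
      intro P hP
      exact e1 P (G.parent_pi hp hP)
    · by_cases ho : ∃ j, v ∈ G.Omega {j}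
      · obtain ⟨j, ho⟩ := ho
        rw [e2 v j ho]
        refine Submodule.span_mono ?_ (hg2 j v ho)
        rintro _ (⟨P, hP, rfl⟩ | ⟨P, hP, rfl⟩)
        · exact ⟨P, hP.2, e1 P hP.1.1⟩
        · exact ⟨P, hP.2, e2 P j hP.1⟩
      · simp only [e]
        rw [if_neg hp, dif_neg ho]
        exact Submodule.zero_mem _
  · intro j
    rw [e2 _ j (G.T_omega hA hTS j), hg1]

end RegionGraph

theorem fin3_cases (l k : Fin 3) : k = l ∨ k = l + 1 ∨ k = l + 2 := by
  revert l k; decide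

theorem span2 {F : Type} [Field F] (l : Fin 3) (a b x : Fin 3 → F) (ha : a l = 0) (hb : b l = 0)
    (hx : x l = 0) (hD : a (l + 1) * b (l + 2) ≠ a (l + 2) * b (l + 1)) (s : Set (Fin 3 → F))
    (has : a ∈ s) (hbs : b ∈ s) : x ∈ Submodule.span F s := by
  have hD' : a (l + 1) * b (l + 2) - a (l + 2) * b (l + 1) ≠ 0 := sub_ne_zero.2 hD
  obtain ⟨D, hDe⟩ : ∃ D, D = a (l + 1) * b (l + 2) - a (l + 2) * b (l + 1) := ⟨_, rfl⟩
  rw [← hDe] at hD'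
  have : x = ((x (l + 1) * b (l + 2) - x (l + 2) * b (l + 1)) / D) • a +
      ((a (l + 1) * x (l + 2) - a (l + 2) * x (l + 1)) / D) • b := by
    funext k
    simp only [Pi.add_apply, Pi.smul_apply, smul_eq_mul]
    rcases fin3_cases l k with h | h | h <;> rw [h]
    · rw [ha, hb, hx]; simp
    · field_simp
      rw [hDe]
      ring
    · field_simp
      rw [hDe]
      ring
  rw [this]
  exact Submodule.add_mem _ (Submodule.smul_mem _ _ (Submodule.subset_span has))
    (Submodule.smul_mem _ _ (Submodule.subset_span hbs))

theorem span3 {F : Type} [Field F] (l : Fin 3) (a b c x : Fin 3 → F) (ha : a l = 0) (hb : b l = 0)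
    (hc : c l ≠ 0) (hD : a (l + 1) * b (l + 2) ≠ a (l + 2) * b (l + 1)) (s : Set (Fin 3 → F))
    (has : a ∈ s) (hbs : b ∈ s) (hcs : c ∈ s) : x ∈ Submodule.span F s := by
  have h1 : x - (x l / c l) • c ∈ Submodule.span F s := by
    refine span2 l a b _ ha hb ?_ hD s has hbs
    simp only [Pi.sub_apply, Pi.smul_apply, smul_eq_mul]
    field_simp
    ring
  have h2 := Submodule.add_mem _ h1
    (Submodule.smul_mem _ (x l / c l) (Submodule.subset_span (R := F) hcs))
  rwa [sub_add_cancel] at h2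

theorem span_tri {F : Type} [Field F] (a b c : Fin 3 → F) (ha : a 0 = 0) (hb : b 1 = 0)
    (hc : c 2 = 0) (hD : a 1 * b 2 * c 0 + a 2 * b 0 * c 1 ≠ 0) (s : Set (Fin 3 → F))
    (has : a ∈ s) (hbs : b ∈ s) (hcs : c ∈ s) : (fun _ => (1 : F)) ∈ Submodule.span F s := by
  obtain ⟨D, hDe⟩ : ∃ D, D = a 1 * b 2 * c 0 + a 2 * b 0 * c 1 := ⟨_, rfl⟩
  rw [← hDe] at hD
  have : (fun _ => (1 : F)) =
      ((b 2 * c 0 - b 2 * c 1 + b 0 * c 1) / D) • a +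
      ((a 2 * c 1 - a 2 * c 0 + a 1 * c 0) / D) • b +
      ((a 2 * b 0 + a 1 * b 2 - a 1 * b 0) / D) • c := by
    funext k
    simp only [Pi.add_apply, Pi.smul_apply, smul_eq_mul]
    fin_cases k
    · simp only [Fin.zero_eta, ha]
      field_simp
      rw [hDe]
      ring
    · simp only [Fin.mk_one, hb]
      field_simp
      rw [hDe]
      ring
    · simp only [Fin.reduceFinMk, hc]
      field_simp
      rw [hDe]
      ring
  rw [this]
  exact Submodule.add_mem _ (Submodule.add_mem _
    (Submodule.smul_mem _ _ (Submodule.subset_span has))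
    (Submodule.smul_mem _ _ (Submodule.subset_span hbs)))
    (Submodule.smul_mem _ _ (Submodule.subset_span hcs))

theorem exists_x {V : Type} [Fintype V] [Nonempty V] (L : Fin 3 → Set V)
    (hL : ∀ j k, j ≠ k → (L j).ncard = 2 → (L k).ncard = 2 → L j ∩ L k = ∅) :
    ∃ (N : ℕ) (x : V → ℕ), 0 < N ∧ Function.Injective x ∧ (∀ v, 0 < x v ∧ x v < N) ∧
      ∀ j u v, L j = {u, v} → u ≠ v → x u + x v = N := by
  classical
  let n := Fintype.card V
  let e : V → ℕ := fun v => (Fintype.equivFin V v : ℕ) + 1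
  have he1 : ∀ v, 0 < e v ∧ e v ≤ n := fun v => ⟨Nat.succ_pos _, (Fintype.equivFin V v).2⟩
  have he2 : Function.Injective e := by
    intro u v h
    have : (Fintype.equivFin V u : ℕ) = Fintype.equivFin V v := Nat.succ_injective h
    exact (Fintype.equivFin V).injective (Fin.ext this)
  have hex : ∀ j, (L j).ncard = 2 → ∃ a b, a ≠ b ∧ L j = {a, b} := fun j h => Set.ncard_eq_two.1 h
  choose! a b hab hLab using hex
  have huniq : ∀ {j k v}, (L j).ncard = 2 → (L k).ncard = 2 → v ∈ L j → v ∈ L k → j = k := by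
    intro j k v hj hk h1 h2
    by_contra hne
    have : v ∈ L j ∩ L k := ⟨h1, h2⟩
    rw [hL j k hne hj hk] at this
    exact this
  have hma : ∀ j, (L j).ncard = 2 → a j ∈ L j := fun j h => by rw [hLab j h]; simp
  have hmb : ∀ j, (L j).ncard = 2 → b j ∈ L j := fun j h => by
    have := hLab j h
    rw [this]; simp
  let B : V → Prop := fun v => ∃ j, (L j).ncard = 2 ∧ v = b j
  let x : V → ℕ := fun v => if h : B v then 2 * n + 1 - e (a h.choose) else e v
  have hxb : ∀ j, (L j).ncard = 2 → x (b j) = 2 * n + 1 - e (a j) := by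
    intro j hj
    have h : B (b j) := ⟨j, hj, rfl⟩
    have h2 : h.choose = j := by
      obtain ⟨h3, h4⟩ := h.choose_spec
      have h5 := hmb _ h3
      rw [← h4] at h5
      exact huniq h3 hj h5 (hmb j hj)
    simp only [x]
    rw [dif_pos h, h2]
  have hxn : ∀ v, ¬ B v → x v = e v := fun v h => dif_neg h
  have hxa : ∀ j, (L j).ncard = 2 → x (a j) = e (a j) := by
    intro j hj
    apply hxn
    rintro ⟨k, hk, h⟩
    have : j = k := huniq hj hk (hma j hj) (h ▸ hmb k hk)
    subst this
    exact hab j hj h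
  refine ⟨2 * n + 1, x, by omega, ?_, ?_, ?_⟩
  · intro u v huv
    by_cases hu : B u <;> by_cases hv : B v
    · obtain ⟨j, hj, rfl⟩ := hu
      obtain ⟨k, hk, rfl⟩ := hv
      rw [hxb j hj, hxb k hk] at huv
      have h1 := he1 (a j)
      have h2 := he1 (a k)
      have h3 : a j = a k := he2 (by omega)
      have : j = k := huniq hj hk (hma j hj) (h3 ▸ hma k hk)
      rw [this]
    · obtain ⟨j, hj, rfl⟩ := hu
      rw [hxb j hj, hxn v hv] at huv
      have h1 := he1 (a j)
      have h2 := he1 v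
      omega
    · obtain ⟨j, hj, rfl⟩ := hv
      rw [hxb j hj, hxn u hu] at huv
      have h1 := he1 (a j)
      have h2 := he1 u
      omega
    · rw [hxn u hu, hxn v hv] at huv
      exact he2 huv
  · intro v
    by_cases hv : B v
    · obtain ⟨j, hj, rfl⟩ := hv
      rw [hxb j hj]
      have h1 := he1 (a j)
      omega
    · rw [hxn v hv]
      have h1 := he1 v
      omega
  · intro j u v h huv
    have hj : (L j).ncard = 2 := by rw [h]; exact Set.ncard_pair huv
    have h1 : x (a j) + x (b j) = 2 * n + 1 := by
      rw [hxa j hj, hxb j hj]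
      have h1 := he1 (a j)
      omega
    have h2 := hLab j hj
    rw [h, Set.pair_eq_pair_iff] at h2
    rcases h2 with ⟨rfl, rfl⟩ | ⟨rfl, rfl⟩
    · exact h1
    · omega

namespace RegionGraph

variable (G : RegionGraph 3)

theorem exists_ln : ∃ ln : G.V → Fin 3, ∀ v ∈ G.bigPi, v ∈ G.Ln (ln v) := by
  have : ∀ v, ∃ l, v ∈ G.bigPi → v ∈ G.Ln l := by
    intro v
    by_cases h : v ∈ G.bigPi
    · obtain ⟨l, hl⟩ := G.bigPi_iff.1 h
      exact ⟨l, fun _ => hl⟩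
    · exact ⟨0, fun h' => absurd h' h⟩
  choose ln hln using this
  exact ⟨ln, hln⟩

/-- Every line coded with a constant interior vector. -/
theorem const_code (F : Type) [Field F] (c : Fin 3 → Fin 3 → F) (hc : ∀ l, c l l = 0) :
    ∃ d : G.V → Fin 3 → F, (∀ i, d (G.S i) = Pi.single i 1) ∧
      (∀ l, ∀ v ∈ G.Ln l, ¬ G.IsSrc v → d v = c l) ∧
      (∀ R ∈ G.bigPi, (∀ i : Fin 3, R ≠ G.S i) →
        d R ∈ Submodule.span F (d '' {p | G.Adj p R})) := by
  classical
  obtain ⟨ln, hln⟩ := G.exists_ln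
  let d : G.V → Fin 3 → F := fun v => if h : G.IsSrc v then Pi.single h.choose 1 else c (ln v)
  have d1 : ∀ i, d (G.S i) = Pi.single i 1 := by
    intro i
    have h : G.IsSrc (G.S i) := ⟨i, rfl⟩
    have h2 : h.choose = i := (G.S_inj h.choose_spec).symm
    simp only [d]
    rw [dif_pos h, h2]
  have d2 : ∀ l, ∀ v ∈ G.Ln l, ¬ G.IsSrc v → d v = c l := by
    intro l v hv hs
    simp only [d]
    rw [dif_neg hs]
    by_cases h : ln v = l
    · rw [h]
    · exact absurd (G.Ln_disj h (hln v (G.bigPi_iff.2 ⟨l, hv⟩)) hv) hs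
  refine ⟨d, d1, d2, ?_⟩
  intro R hR hRs
  have hns : ¬ G.IsSrc R := fun ⟨i, hi⟩ => hRs i hi
  obtain ⟨l, hl⟩ := G.bigPi_iff.1 hR
  obtain ⟨p, q, hpq, hp, hq⟩ := G.two_parents' hns
  have hpl := G.parent_Ln hl hp
  have hql := G.parent_Ln hl hq
  rw [d2 l R hl hns]
  by_cases h1 : G.IsSrc p
  · by_cases h2 : G.IsSrc q
    · obtain ⟨i, rfl⟩ := h1
      obtain ⟨k, rfl⟩ := h2
      have e1 := G.src_mem_Ln.1 hpl
      have e2 := G.src_mem_Ln.1 hql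
      have e3 : i ≠ k := fun h => hpq (by rw [h])
      refine span2 l (d (G.S i)) (d (G.S k)) _ ?_ ?_ (hc l) ?_ _ ⟨_, hp, rfl⟩ ⟨_, hq, rfl⟩
      · rw [d1, Pi.single_eq_of_ne (Ne.symm e1)]
      · rw [d1, Pi.single_eq_of_ne (Ne.symm e2)]
      · rw [d1, d1]
        have : (i = l + 1 ∧ k = l + 2) ∨ (i = l + 2 ∧ k = l + 1) := by
          clear hp hq hpl hql hpq hl
          revert i k l; decide
        have hne : l + 1 ≠ l + 2 := by clear hl hpl hql e1 e2 this; revert l; decide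
        rcases this with ⟨rfl, rfl⟩ | ⟨rfl, rfl⟩ <;> simp [Pi.single_apply, hne, hne.symm]
    · exact Submodule.subset_span ⟨q, hq, d2 l q hql h2⟩
  · exact Submodule.subset_span ⟨p, hp, d2 l p hpl h1⟩

theorem aux3a : ∀ l : Fin 3,
    (Pi.single (l + 1) 1 - Pi.single (l + 2) 1 : Fin 3 → ZMod 3) l = 0 := by decide

theorem aux3b : ∀ l k : Fin 3, k ≠ l →
    (fun _ => (1 : ZMod 3)) = (Pi.single (l + 1) 1 - Pi.single (l + 2) 1 : Fin 3 → ZMod 3) -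
        (Pi.single (k + 1) 1 - Pi.single (k + 2) 1 : Fin 3 → ZMod 3) ∨
    (fun _ => (1 : ZMod 3)) = (Pi.single (k + 1) 1 - Pi.single (k + 2) 1 : Fin 3 → ZMod 3) -
        (Pi.single (l + 1) 1 - Pi.single (l + 2) 1 : Fin 3 → ZMod 3) := by decide

theorem aux4a : ∀ m l : Fin 3,
    (if l = m then Pi.single (m + 1) 1 + Pi.single (m + 2) 1 else Pi.single m 1 :
      Fin 3 → ZMod 2) l = 0 := by decide

theorem aux4b : ∀ m : Fin 3, (fun _ => (1 : ZMod 2)) =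
    (Pi.single (m + 1) 1 + Pi.single (m + 2) 1 : Fin 3 → ZMod 2) + Pi.single m 1 := by decide

theorem case3 (hA : G.Assumption1) (hTS : G.TerminalSeparable)
    (h : ∀ i j : Fin 3, G.S i ∉ G.Lambda {j}) : G.Feasible := by
  have : Fact (Nat.Prime 3) := ⟨Nat.prime_three⟩
  let c : Fin 3 → Fin 3 → ZMod 3 := fun l => Pi.single (l + 1) 1 - Pi.single (l + 2) 1
  obtain ⟨d, d1, d2, d3⟩ := G.const_code (ZMod 3) c aux3a
  refine G.feasible_of_conds hA hTS (ZMod 3) d ⟨d1, d3, fun j => ?_⟩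
  have hns : ∀ v ∈ G.Lambda {j}, ¬ G.IsSrc v := by
    rintro v hv ⟨i, rfl⟩
    exact h i j hv
  obtain ⟨v, hv, _⟩ := G.lambda_not_sub hA hTS j 0
  obtain ⟨l, hl⟩ := G.bigPi_iff.1 hv.1
  obtain ⟨u, hu, hul⟩ := G.lambda_not_sub hA hTS j l
  obtain ⟨k, hk⟩ := G.bigPi_iff.1 hu.1
  have hne : k ≠ l := by rintro rfl; exact hul hk
  have m1 : c l ∈ Submodule.span (ZMod 3) (d '' G.Lambda {j}) :=
    Submodule.subset_span ⟨v, hv, d2 l v hl (hns v hv)⟩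
  have m2 : c k ∈ Submodule.span (ZMod 3) (d '' G.Lambda {j}) :=
    Submodule.subset_span ⟨u, hu, d2 k u hk (hns u hu)⟩
  have : (fun _ => (1 : ZMod 3)) = c l - c k ∨ (fun _ => (1 : ZMod 3)) = c k - c l := aux3b l k hne
  rcases this with h | h <;> rw [h]
  · exact Submodule.sub_mem _ m1 m2
  · exact Submodule.sub_mem _ m2 m1

theorem case4 (hA : G.Assumption1) (hTS : G.TerminalSeparable)
    (h : ∃ l l' : Fin 3, l ≠ l' ∧ ∀ j : Fin 3,
            (G.Lambda {j} ∩ G.regO {G.S l, G.S l'}).Nonempty) : G.Feasible := by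
  obtain ⟨l, l', hll, h⟩ := h
  have hm : ∃ m : Fin 3, (l = m + 1 ∧ l' = m + 2) ∨ (l = m + 2 ∧ l' = m + 1) := by
    clear h; revert l l'; decide
  obtain ⟨m, hm⟩ := hm
  have hset : ({G.S l, G.S l'} : Set G.V) = {G.S (m + 1), G.S (m + 2)} := by
    rcases hm with ⟨rfl, rfl⟩ | ⟨rfl, rfl⟩
    · rfl
    · exact Set.pair_comm _ _
  have : Fact (Nat.Prime 2) := ⟨Nat.prime_two⟩
  let c : Fin 3 → Fin 3 → ZMod 2 := fun l =>
    if l = m then Pi.single (m + 1) 1 + Pi.single (m + 2) 1 else Pi.single m 1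
  obtain ⟨d, d1, d2, d3⟩ := G.const_code (ZMod 2) c (aux4a m)
  refine G.feasible_of_conds hA hTS (ZMod 2) d ⟨d1, d3, fun j => ?_⟩
  obtain ⟨v, hv, hv1, hv2⟩ := h j
  rw [hset] at hv1 hv2
  have hvm : v ∈ G.Ln m := hv1
  have hvs : ¬ G.IsSrc v := by
    rintro ⟨i, rfl⟩
    have := G.src_mem_Ln.1 hvm
    rcases fin3_cases m i with h | h | h
    · exact this h
    · subst h; exact hv2 (by simp)
    · subst h; exact hv2 (by simp)
  have m1 : c m ∈ Submodule.span (ZMod 2) (d '' G.Lambda {j}) :=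
    Submodule.subset_span ⟨v, hv, d2 m v hvm hvs⟩
  obtain ⟨u, hu, hum⟩ := G.lambda_not_sub hA hTS j m
  have m2 : Pi.single m 1 ∈ Submodule.span (ZMod 2) (d '' G.Lambda {j}) := by
    apply Submodule.subset_span
    refine ⟨u, hu, ?_⟩
    by_cases hs : G.IsSrc u
    · obtain ⟨i, rfl⟩ := hs
      rw [G.src_mem_Ln, not_not] at hum
      rw [hum, d1]
    · obtain ⟨k, hk⟩ := G.bigPi_iff.1 hu.1
      have hne : k ≠ m := by rintro rfl; exact hum hk
      rw [d2 k u hk hs]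
      exact if_neg hne
  have : (fun _ => (1 : ZMod 2)) = c m + Pi.single m 1 := by
    simp only [c, if_true]
    exact aux4b m
  rw [this]
  exact Submodule.add_mem _ m1 m2

end RegionGraph
namespace RegionGraph

variable (G : RegionGraph 3)

theorem exists_W (hA : G.Assumption1) (hTS : G.TerminalSeparable)
    (h : ∀ j₁ j₂ : Fin 3, j₁ ≠ j₂ →
            (G.Lambda {j₁}).ncard = 2 → (G.Lambda {j₂}).ncard = 2 →
            G.Lambda {j₁} ∩ G.Lambda {j₂} = ∅) :
    ∃ (N : ℕ) (W : G.V → Fin 3 → ℕ), 0 < N ∧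
      (∀ i, W (G.S i) = Pi.single i 1) ∧
      (∀ l, ∀ v ∈ G.Ln l, ¬ G.IsSrc v → W v l = 0 ∧ ∀ c, c ≠ l → 0 < W v c) ∧
      (∀ l, ∀ u ∈ G.Ln l, ∀ v ∈ G.Ln l, u ≠ v →
        W u (l + 1) * W v (l + 2) ≠ W u (l + 2) * W v (l + 1)) ∧
      (∀ v c, W v c ≤ N) ∧
      (∀ j u v, G.Lambda {j} = {u, v} → u ≠ v →
        ∃ a b : ℕ, ∀ c, a * W u c + b * W v c = N) := by
  classical
  have := G.fintypeV
  have : Nonempty G.V := ⟨G.S 0⟩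
  obtain ⟨N, x, hN, hxi, hx, hxs⟩ := exists_x (fun j => G.Lambda {j}) h
  obtain ⟨ln, hln⟩ := G.exists_ln
  have huniq : ∀ {j k v}, (G.Lambda {j}).ncard = 2 → (G.Lambda {k}).ncard = 2 →
      v ∈ G.Lambda {j} → v ∈ G.Lambda {k} → j = k := by
    intro j k v hj hk h1 h2
    by_contra hne
    have h3 : v ∈ G.Lambda {j} ∩ G.Lambda {k} := ⟨h1, h2⟩
    rw [h j k hne hj hk] at h3
    exact h3
  have hlnu : ∀ l, ∀ v ∈ G.Ln l, ¬ G.IsSrc v → ln v = l := by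
    intro l v hv hs
    by_contra h
    exact hs (G.Ln_disj h (hln v (G.bigPi_iff.2 ⟨l, hv⟩)) hv)
  let Mid : G.V → Prop := fun v => ∃ j, (G.Lambda {j}).ncard = 2 ∧ v ∈ G.Lambda {j} ∧
    G.S (ln v) ∈ G.Lambda {j}
  let y : G.V → ℕ := fun v => if Mid v then N else x v
  let Pv : G.V → Prop := fun v => ∃ j, (G.Lambda {j}).ncard = 2 ∧ v ∈ G.Lambda {j} ∧
    ∃ v' ∈ G.Lambda {j}, ¬ G.IsSrc v' ∧ v' ∈ G.Ln (ln v + 1)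
  let pv : G.V → Fin 3 := fun v => if Pv v then ln v + 2 else ln v + 1
  let w : G.V → Fin 3 → ℕ := fun v c => if c = ln v then 0 else if c = pv v then y v else N
  let W : G.V → Fin 3 → ℕ := fun v => if h : G.IsSrc v then Pi.single h.choose 1 else w v
  have hWs : ∀ i, W (G.S i) = Pi.single i 1 := by
    intro i
    have h : G.IsSrc (G.S i) := ⟨i, rfl⟩
    have h2 : h.choose = i := (G.S_inj h.choose_spec).symm
    simp only [W]
    rw [dif_pos h, h2]
  have hWn : ∀ v, ¬ G.IsSrc v → W v = w v := fun v h => dif_neg h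
  have hypos : ∀ v, 0 < y v := by
    intro v
    simp only [y]
    split_ifs
    · exact hN
    · exact (hx v).1
  have hyle : ∀ v, y v ≤ N := by
    intro v
    simp only [y]
    split_ifs
    · exact le_rfl
    · exact (hx v).2.le
  have hylt : ∀ v, ¬ Mid v → y v < N := by
    intro v hv
    simp only [y]
    rw [if_neg hv]
    exact (hx v).2
  have hmid : ∀ u v, ¬ G.IsSrc u → ¬ G.IsSrc v → ln u = ln v → Mid u → Mid v → u = v := by
    rintro u v hu hv huv ⟨j, hj, hj1, hj2⟩ ⟨k, hk, hk1, hk2⟩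
    rw [huv] at hj2
    have := huniq hj hk hj2 hk2
    subst this
    by_contra hne
    have hu' : u ≠ G.S (ln v) := fun h => hu ⟨_, h⟩
    have hv' : v ≠ G.S (ln v) := fun h => hv ⟨_, h⟩
    obtain ⟨a, b, _, hab⟩ := Set.ncard_eq_two.1 hj
    rw [hab] at hj1 hj2 hk1
    simp only [Set.mem_insert_iff, Set.mem_singleton_iff] at hj1 hj2 hk1
    grind
  have hW2 : ∀ l, ∀ v ∈ G.Ln l, ¬ G.IsSrc v → W v l = 0 ∧ ∀ c, c ≠ l → 0 < W v c := by
    intro l v hv hs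
    have hl := hlnu l v hv hs
    rw [hWn v hs]
    refine ⟨if_pos hl.symm, fun c hc => ?_⟩
    simp only [w]
    rw [if_neg (hl ▸ hc)]
    split_ifs
    · exact hypos v
    · exact hN
  have hp12 : ∀ l : Fin 3, l + 1 ≠ l ∧ l + 2 ≠ l ∧ l + 1 ≠ l + 2 := by decide
  have hpv : ∀ v, (pv v = ln v + 1 ∧ w v (ln v + 1) = y v ∧ w v (ln v + 2) = N) ∨
      (pv v = ln v + 2 ∧ w v (ln v + 1) = N ∧ w v (ln v + 2) = y v) := by
    intro v
    obtain ⟨e1, e2, e3⟩ := hp12 (ln v)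
    by_cases hP : Pv v
    · right
      have : pv v = ln v + 2 := if_pos hP
      refine ⟨this, ?_, ?_⟩
      · simp only [w]; rw [this, if_neg e1, if_neg e3]
      · simp only [w]; rw [this, if_neg e2, if_pos rfl]
    · left
      have : pv v = ln v + 1 := if_neg hP
      refine ⟨this, ?_, ?_⟩
      · simp only [w]; rw [this, if_neg e1, if_pos rfl]
      · simp only [w]; rw [this, if_neg e2, if_neg e3.symm]
  have hyy : ∀ u v, ¬ G.IsSrc u → ¬ G.IsSrc v → ln u = ln v → u ≠ v →
      y u ≠ y v ∧ y u * y v < N * N := by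
    intro u v hu hv huv hne
    have hor : ¬ Mid u ∨ ¬ Mid v := by
      by_contra hcon
      push Not at hcon
      exact hne (hmid u v hu hv huv hcon.1 hcon.2)
    constructor
    · intro he
      by_cases h1 : Mid u
      · have h2 := hor.resolve_left (not_not.2 h1)
        have h3 := hylt v h2
        have h4 : y u = N := if_pos h1
        omega
      · by_cases h2 : Mid v
        · have h3 := hylt u h1
          have h4 : y v = N := if_pos h2
          omega
        · have h3 : y u = x u := if_neg h1
          have h4 : y v = x v := if_neg h2
          exact hne (hxi (by omega))
    · rcases hor with h1 | h1
      · exact Nat.mul_lt_mul_of_lt_of_le (hylt u h1) (hyle v) hN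
      · exact Nat.mul_lt_mul_of_le_of_lt (hyle u) (hylt v h1) hN
  refine ⟨N, W, hN, hWs, hW2, ?_, ?_, ?_⟩
  · intro l u hu v hv hne
    obtain ⟨e1, e2, e3⟩ := hp12 l
    by_cases hus : G.IsSrc u
    · by_cases hvs : G.IsSrc v
      · obtain ⟨i, rfl⟩ := hus
        obtain ⟨k, rfl⟩ := hvs
        have e4 := G.src_mem_Ln.1 hu
        have e5 := G.src_mem_Ln.1 hv
        have e6 : i ≠ k := fun h => hne (by rw [h])
        rw [hWs, hWs]
        clear hu hv hne
        revert i k l; decide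
      · obtain ⟨i, rfl⟩ := hus
        have e4 := G.src_mem_Ln.1 hu
        have h1 := (hW2 l v hv hvs).2 _ e1
        have h2 := (hW2 l v hv hvs).2 _ e2
        rw [hWs]
        rcases fin3_cases l i with rfl | rfl | rfl
        · exact absurd rfl e4
        · simp [Pi.single_apply, e3, e3.symm]; omega
        · simp [Pi.single_apply, e3, e3.symm]; omega
    · by_cases hvs : G.IsSrc v
      · obtain ⟨i, rfl⟩ := hvs
        have e4 := G.src_mem_Ln.1 hv
        have h1 := (hW2 l u hu hus).2 _ e1
        have h2 := (hW2 l u hu hus).2 _ e2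
        rw [hWs]
        rcases fin3_cases l i with rfl | rfl | rfl
        · exact absurd rfl e4
        · simp [Pi.single_apply, e3, e3.symm]; omega
        · simp [Pi.single_apply, e3, e3.symm]; omega
      · have hlu := hlnu l u hu hus
        have hlv := hlnu l v hv hvs
        obtain ⟨h1, h2⟩ := hyy u v hus hvs (hlu.trans hlv.symm) hne
        rw [hWn u hus, hWn v hvs]
        have pu := hpv u
        have pv' := hpv v
        rw [hlu] at pu
        rw [hlv] at pv'
        rcases pu with ⟨_, a1, a2⟩ | ⟨_, a1, a2⟩ <;> rcases pv' with ⟨_, b1, b2⟩ | ⟨_, b1, b2⟩ <;>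
          rw [a1, a2, b1, b2]
        · intro h
          rw [Nat.mul_comm] at h
          exact h1 (Nat.eq_of_mul_eq_mul_left hN h)
        · omega
        · omega
        · intro h
          rw [Nat.mul_comm (y u)] at h
          exact h1 (Nat.eq_of_mul_eq_mul_left hN h).symm
  · intro v c
    by_cases hs : G.IsSrc v
    · obtain ⟨i, rfl⟩ := hs
      rw [hWs, Pi.single_apply]
      split_ifs <;> omega
    · rw [hWn v hs]
      simp only [w]
      split_ifs
      · omega
      · exact hyle v
      · exact le_rfl
  · -- pairs
    have hA1 : ∀ j u v, G.Lambda {j} = {u, v} → ∀ l, u ∈ G.Ln l → v ∈ G.Ln l → False := by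
      intro j u v hj l hu hv
      obtain ⟨t, ht, htl⟩ := G.lambda_not_sub hA hTS j l
      rw [hj] at ht
      rcases ht with rfl | ht
      · exact htl hu
      · rw [Set.mem_singleton_iff] at ht
        subst ht
        exact htl hv
    have hsrc : ∀ j i v, G.Lambda {j} = {G.S i, v} → G.S i ≠ v →
        ∃ a b : ℕ, ∀ c, a * W (G.S i) c + b * W v c = N := by
      intro j i v hj hne
      have hcard : (G.Lambda {j}).ncard = 2 := by rw [hj]; exact Set.ncard_pair hne
      by_cases hs : G.IsSrc v
      · obtain ⟨k, rfl⟩ := hs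
        have : ∃ l, i ≠ l ∧ k ≠ l := by clear hj hne; revert i k; decide
        obtain ⟨l, h1, h2⟩ := this
        exact (hA1 _ _ _ hj l (G.src_mem_Ln.2 h1) (G.src_mem_Ln.2 h2)).elim
      · have hvL : v ∈ G.Lambda {j} := by rw [hj]; simp
        obtain ⟨l, hl⟩ := G.bigPi_iff.1 hvL.1
        have hlv := hlnu l v hl hs
        have hil : i = l := by
          by_contra h
          exact hA1 _ _ _ hj l (G.src_mem_Ln.2 h) hl
        subst hil
        have hM : Mid v := ⟨j, hcard, hvL, by rw [hlv, hj]; simp⟩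
        have hy : y v = N := if_pos hM
        refine ⟨N, 1, fun c => ?_⟩
        rw [hWs, hWn v hs]
        simp only [w, hlv, Pi.single_apply, hy]
        by_cases hc : c = i <;> simp [hc]
    have hint : ∀ j u v l, G.Lambda {j} = {u, v} → u ≠ v → ¬ G.IsSrc u → ¬ G.IsSrc v →
        u ∈ G.Ln l → v ∈ G.Ln (l + 1) → ∀ c, W u c + W v c = N := by
      intro j u v l hj hne hu hv hul hvl
      have hcard : (G.Lambda {j}).ncard = 2 := by rw [hj]; exact Set.ncard_pair hne
      have hlu := hlnu l u hul hu
      have hlv := hlnu _ v hvl hv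
      have huL : u ∈ G.Lambda {j} := by rw [hj]; simp
      have hvL : v ∈ G.Lambda {j} := by rw [hj]; simp
      have hns : ∀ i, G.S i ∉ G.Lambda {j} := by
        intro i hi
        rw [hj] at hi
        rcases hi with hi | hi
        · exact hu ⟨i, hi.symm⟩
        · exact hv ⟨i, hi.symm⟩
      have hMu : ¬ Mid u := by
        rintro ⟨k, hk, hk1, hk2⟩
        have := huniq hcard hk huL hk1
        subst this
        exact hns _ hk2
      have hMv : ¬ Mid v := by
        rintro ⟨k, hk, hk1, hk2⟩
        have := huniq hcard hk hvL hk1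
        subst this
        exact hns _ hk2
      have hyu : y u = x u := if_neg hMu
      have hyv : y v = x v := if_neg hMv
      have hPu : Pv u := ⟨j, hcard, huL, v, hvL, hv, by rw [hlu]; exact hvl⟩
      have hPv : ¬ Pv v := by
        rintro ⟨k, hk, hk1, t, ht, hts, htl⟩
        have := huniq hcard hk hvL hk1
        subst this
        have e := hlnu _ t htl hts
        rw [hlv] at e
        rw [hj] at ht
        rcases ht with ht | ht
        · rw [ht, hlu] at e
          clear hul hvl hlu hlv htl
          revert l; decide
        · rw [Set.mem_singleton_iff] at ht
          rw [ht, hlv] at e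
          clear hul hvl hlu hlv htl
          revert l; decide
      have hpu : pv u = l + 2 := by simp only [pv]; rw [if_pos hPu, hlu]
      have hpv : pv v = l + 1 + 1 := by simp only [pv]; rw [if_neg hPv, hlv]
      have hsum := hxs j u v hj hne
      have q1 : ∀ l : Fin 3, l ≠ l + 1 ∧ l ≠ l + 1 + 1 ∧ l + 1 ≠ l + 2 ∧ l + 1 + 1 = l + 2 := by
        decide
      obtain ⟨q1, q2, q3, q4⟩ := q1 l
      intro c
      rw [hWn u hu, hWn v hv]
      simp only [w, hlu, hlv, hpu, hpv, hyu, hyv, q4]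
      rw [q4] at q2
      rcases fin3_cases l c with rfl | rfl | rfl
      · simp [q1, q2]
      · simp [q1.symm, q3]
      · simp [q2.symm, q3.symm, hsum]
    intro j u v hj hne
    have huL : u ∈ G.Lambda {j} := by rw [hj]; simp
    have hvL : v ∈ G.Lambda {j} := by rw [hj]; simp
    have hj' : G.Lambda {j} = {v, u} := by rw [hj, Set.pair_comm]
    by_cases hu : G.IsSrc u
    · obtain ⟨i, rfl⟩ := hu
      exact hsrc j i v hj hne
    · by_cases hv : G.IsSrc v
      · obtain ⟨i, rfl⟩ := hv
        obtain ⟨a, b, hab⟩ := hsrc j i u hj' hne.symm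
        exact ⟨b, a, fun c => by rw [Nat.add_comm]; exact hab c⟩
      · obtain ⟨l, hl⟩ := G.bigPi_iff.1 huL.1
        obtain ⟨k, hk⟩ := G.bigPi_iff.1 hvL.1
        rcases fin3_cases l k with rfl | rfl | rfl
        · exact (hA1 _ _ _ hj _ hl hk).elim
        · exact ⟨1, 1, fun c => by simpa using hint j u v l hj hne hu hv hl hk c⟩
        · have : l = l + 2 + 1 := by clear hl hk; revert l; decide
          rw [this] at hl
          refine ⟨1, 1, fun c => ?_⟩
          have := hint j v u (l + 2) hj' hne.symm hv hu hk hl c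
          omega

theorem case2 (hA : G.Assumption1) (hTS : G.TerminalSeparable)
    (h : ∀ j₁ j₂ : Fin 3, j₁ ≠ j₂ →
            (G.Lambda {j₁}).ncard = 2 → (G.Lambda {j₂}).ncard = 2 →
            G.Lambda {j₁} ∩ G.Lambda {j₂} = ∅) : G.Feasible := by
  obtain ⟨N, W, hN, hWs, hW2, hW3, hWN, hW5⟩ := G.exists_W hA hTS h
  obtain ⟨p, hpN, hp⟩ := Nat.exists_infinite_primes (2 * (N * N * N) + N * N + N + 1)
  have : Fact p.Prime := ⟨hp⟩
  have cast_ne : ∀ {a b : ℕ}, a < p → b < p → a ≠ b → (a : ZMod p) ≠ b := by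
    intro a b ha hb hne he
    rw [ZMod.natCast_eq_natCast_iff', Nat.mod_eq_of_lt ha, Nat.mod_eq_of_lt hb] at he
    exact hne he
  have cast_ne0 : ∀ {a : ℕ}, a < p → a ≠ 0 → (a : ZMod p) ≠ 0 := by
    intro a ha h0
    have := cast_ne ha hp.pos h0
    simpa using this
  have hNp : N < p := by omega
  let d : G.V → Fin 3 → ZMod p := fun v c => (W v c : ZMod p)
  have hd0 : ∀ l, ∀ v ∈ G.Ln l, d v l = 0 := by
    intro l v hv
    have : W v l = 0 := by
      by_cases hs : G.IsSrc v
      · obtain ⟨i, rfl⟩ := hs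
        rw [hWs, Pi.single_eq_of_ne (Ne.symm (G.src_mem_Ln.1 hv))]
      · exact (hW2 l v hv hs).1
    simp only [d, this, Nat.cast_zero]
  have hdn : ∀ l v, v ∈ G.bigPi → v ∉ G.Ln l → d v l ≠ 0 := by
    intro l v hv hvl
    apply cast_ne0 (lt_of_le_of_lt (hWN v l) hNp)
    by_cases hs : G.IsSrc v
    · obtain ⟨i, rfl⟩ := hs
      rw [G.src_mem_Ln, not_not] at hvl
      rw [hWs, hvl]; simp
    · obtain ⟨k, hk⟩ := G.bigPi_iff.1 hv
      exact ((hW2 k v hk hs).2 l (by rintro rfl; exact hvl hk)).ne'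
  have hdd : ∀ l, ∀ u ∈ G.Ln l, ∀ v ∈ G.Ln l, u ≠ v →
        d u (l + 1) * d v (l + 2) ≠ d u (l + 2) * d v (l + 1) := by
    intro l u hu v hv hne
    have h1 := hW3 l u hu v hv hne
    have h2 := Nat.mul_le_mul (hWN u (l + 1)) (hWN v (l + 2))
    have h3 := Nat.mul_le_mul (hWN u (l + 2)) (hWN v (l + 1))
    have := cast_ne (lt_of_le_of_lt h2 (by omega)) (lt_of_le_of_lt h3 (by omega)) h1
    simpa [d] using this
  refine G.feasible_of_conds hA hTS (ZMod p) d ⟨?_, ?_, ?_⟩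
  · intro i
    funext c
    simp only [d, hWs, Pi.single_apply]
    split_ifs <;> simp
  · intro R hR hRs
    have hns : ¬ G.IsSrc R := fun ⟨i, hi⟩ => hRs i hi
    obtain ⟨l, hl⟩ := G.bigPi_iff.1 hR
    obtain ⟨s, t, hst, hs, ht⟩ := G.two_parents' hns
    have hsl := G.parent_Ln hl hs
    have htl := G.parent_Ln hl ht
    exact span2 l (d s) (d t) _ (hd0 l s hsl) (hd0 l t htl) (hd0 l R hl)
      (hdd l s hsl t htl hst) _ ⟨s, hs, rfl⟩ ⟨t, ht, rfl⟩
  · intro j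
    obtain ⟨v, hv, _⟩ := G.lambda_not_sub hA hTS j 0
    obtain ⟨l, hl⟩ := G.bigPi_iff.1 hv.1
    obtain ⟨u, hu, hul⟩ := G.lambda_not_sub hA hTS j l
    have huv : u ≠ v := by rintro rfl; exact hul hl
    by_cases hex : ∃ t ∈ G.Lambda {j}, t ≠ u ∧ t ≠ v
    · obtain ⟨t, ht, htu, htv⟩ := hex
      by_cases H : ∃ k, ∃ a ∈ G.Lambda {j}, ∃ b ∈ G.Lambda {j}, a ≠ b ∧ a ∈ G.Ln k ∧ b ∈ G.Ln k
      · obtain ⟨k, a, ha, b, hb, hab, hak, hbk⟩ := H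
        obtain ⟨c, hc, hck⟩ := G.lambda_not_sub hA hTS j k
        exact span3 k (d a) (d b) (d c) _ (hd0 k a hak) (hd0 k b hbk) (hdn k c hc.1 hck)
          (hdd k a hak b hbk hab) _ ⟨a, ha, rfl⟩ ⟨b, hb, rfl⟩ ⟨c, hc, rfl⟩
      · push Not at H
        have hns : ∀ a ∈ G.Lambda {j}, ∀ b ∈ G.Lambda {j}, ∀ c ∈ G.Lambda {j}, a ≠ b → a ≠ c →
            b ≠ c → ¬ G.IsSrc a := by
          rintro a ha b hb c hc hab hac hbc ⟨i, rfl⟩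
          have q : ∀ b ∈ G.Lambda {j}, G.S i ≠ b → b ∈ G.Ln i := by
            intro b hb hne
            obtain ⟨k, hk⟩ := G.bigPi_iff.1 hb.1
            by_cases hik : i = k
            · rw [hik]; exact hk
            · exact absurd hk (H k _ ha _ hb hne (G.src_mem_Ln.2 hik))
          exact H i b hb c hc hbc (q b hb hab) (q c hc hac)
        have su := hns u hu v hv t ht huv htu.symm htv.symm
        have sv := hns v hv u hu t ht huv.symm htv.symm htu.symm
        have st := hns t ht u hu v hv htu htv huv
        obtain ⟨k, hk⟩ := G.bigPi_iff.1 hu.1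
        obtain ⟨m, hm⟩ := G.bigPi_iff.1 ht.1
        have n1 : k ≠ l := by rintro rfl; exact hul hk
        have n2 : m ≠ l := by rintro rfl; exact H _ _ ht _ hv htv hm hl
        have n3 : m ≠ k := by rintro rfl; exact H _ _ ht _ hu htu hm hk
        have hall : ∀ i, ∃ a ∈ G.Lambda {j}, ¬ G.IsSrc a ∧ a ∈ G.Ln i := by
          intro i
          have : i = k ∨ i = l ∨ i = m := by
            clear hl hul hk hm
            revert i k l m; decide
          rcases this with rfl | rfl | rfl
          · exact ⟨u, hu, su, hk⟩
          · exact ⟨v, hv, sv, hl⟩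
          · exact ⟨t, ht, st, hm⟩
        obtain ⟨a, ha, sa, la⟩ := hall 0
        obtain ⟨b, hb, sb, lb⟩ := hall 1
        obtain ⟨c, hc, sc, lc⟩ := hall 2
        refine span_tri (d a) (d b) (d c) (hd0 _ _ la) (hd0 _ _ lb) (hd0 _ _ lc) ?_ _
          ⟨a, ha, rfl⟩ ⟨b, hb, rfl⟩ ⟨c, hc, rfl⟩
        have b1 := Nat.mul_le_mul (Nat.mul_le_mul (hWN a 1) (hWN b 2)) (hWN c 0)
        have b2 := Nat.mul_le_mul (Nat.mul_le_mul (hWN a 2) (hWN b 0)) (hWN c 1)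
        have b3 : 0 < W a 1 * W b 2 * W c 0 :=
          Nat.mul_pos (Nat.mul_pos ((hW2 0 a la sa).2 1 (by decide))
            ((hW2 1 b lb sb).2 2 (by decide))) ((hW2 2 c lc sc).2 0 (by decide))
        have := cast_ne0 (a := W a 1 * W b 2 * W c 0 + W a 2 * W b 0 * W c 1) (by omega) (by omega)
        simpa [d] using this
    · push Not at hex
      have hΛ : G.Lambda {j} = {u, v} := by
        ext t
        simp only [Set.mem_insert_iff, Set.mem_singleton_iff]
        constructor
        · intro ht
          by_contra hcon
          push Not at hcon
          exact hcon.2 (hex t ht hcon.1)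
        · rintro (rfl | rfl)
          exacts [hu, hv]
      obtain ⟨a, b, hab⟩ := hW5 j u v hΛ huv
      have hN0 : (N : ZMod p) ≠ 0 := cast_ne0 hNp hN.ne'
      have : (fun _ => (1 : ZMod p)) = (N : ZMod p)⁻¹ • ((a : ZMod p) • d u + (b : ZMod p) • d v) := by
        funext c
        have := congrArg (fun n : ℕ => (n : ZMod p)) (hab c)
        push_cast at this
        simp only [Pi.smul_apply, Pi.add_apply, smul_eq_mul, d]
        rw [this, inv_mul_cancel₀ hN0]
      rw [this]
      exact Submodule.smul_mem _ _ (Submodule.add_mem _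
        (Submodule.smul_mem _ _ (Submodule.subset_span ⟨u, hu, rfl⟩))
        (Submodule.smul_mem _ _ (Submodule.subset_span ⟨v, hv, rfl⟩)))

end RegionGraph

/-- Sufficient conditions for feasibility of a terminal-separable region graph
with exactly three terminals satisfying Assumption 1. -/
theorem three_terminal_sufficient (G : RegionGraph 3)
    (hA : G.Assumption1) (hTS : G.TerminalSeparable)
    (h : (∃ j₁ j₂ : Fin 3, j₁ ≠ j₂ ∧
            3 ≤ (G.Lambda {j₁}).ncard ∧ 3 ≤ (G.Lambda {j₂}).ncard) ∨
         (∀ j₁ j₂ : Fin 3, j₁ ≠ j₂ →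
            (G.Lambda {j₁}).ncard = 2 → (G.Lambda {j₂}).ncard = 2 →
            G.Lambda {j₁} ∩ G.Lambda {j₂} = ∅) ∨
         (∀ i j : Fin 3, G.S i ∉ G.Lambda {j}) ∨
         (∃ l l' : Fin 3, l ≠ l' ∧ ∀ j : Fin 3,
            (G.Lambda {j} ∩ G.regO {G.S l, G.S l'}).Nonempty)) :
    G.Feasible := by
  rcases h with h | h | h | h
  · obtain ⟨j₁, j₂, hne, h1, h2⟩ := h
    refine G.case2 hA hTS fun a b hab ha hb => ?_
    have : a = j₁ ∨ a = j₂ ∨ b = j₁ ∨ b = j₂ := by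
      clear h1 h2 ha hb
      revert a b j₁ j₂; decide
    rcases this with rfl | rfl | rfl | rfl <;> omega
  · exact G.case2 hA hTS h
  · exact G.case3 hA hTS h
  · exact G.case4 hA hTS h

end SumNetworksPaper
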